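/- arXiv:math/0012029 — 2 statements merged into one kernel-verified Lean document; each statement's English description precedes it below -/
import Mathlib

section
/- For every n ≥ 6 there is no permutation of {1,…,n} that contains the pattern 123 exactly once and also contains the pattern 321 exactly once; that is, s_n(∅;{123,321}) = 0 for n ≥ 6. -/
/-- Number of occurrences of the pattern `α ∈ S_k` in the permutation `π ∈ S_n`:
the number of strictly increasing choices of `k` indices such that the corresponding
subword of `π` is order-isomorphic to `α`. -/
noncomputable def occCount {k n : ℕ} (α : Equiv.Perm (Fin k)) (π : Equiv.Perm (Fin n)) : ℕ :=
  Nat.card {f : Fin k → Fin n // StrictMono f ∧ ∀ a b : Fin k, α a < α b ↔ π (f a) < π (f b)}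

/-- `π` avoids the pattern `α`. -/
def avoids {k n : ℕ} (α : Equiv.Perm (Fin k)) (π : Equiv.Perm (Fin n)) : Prop :=
  occCount α π = 0

/-- `π` contains the pattern `α` exactly once. -/
def containsOnce {k n : ℕ} (α : Equiv.Perm (Fin k)) (π : Equiv.Perm (Fin n)) : Prop :=
  occCount α π = 1

/-- The pattern `123` (as a permutation of `Fin 3`, 0-indexed). -/
def p123 : Equiv.Perm (Fin 3) := ⟨![0,1,2], ![0,1,2], by decide, by decide⟩
/-- The pattern `132`. -/
def p132 : Equiv.Perm (Fin 3) := ⟨![0,2,1], ![0,2,1], by decide, by decide⟩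
/-- The pattern `213`. -/
def p213 : Equiv.Perm (Fin 3) := ⟨![1,0,2], ![1,0,2], by decide, by decide⟩
/-- The pattern `231`. -/
def p231 : Equiv.Perm (Fin 3) := ⟨![1,2,0], ![2,0,1], by decide, by decide⟩
/-- The pattern `312`. -/
def p312 : Equiv.Perm (Fin 3) := ⟨![2,0,1], ![1,2,0], by decide, by decide⟩
/-- The pattern `321`. -/
def p321 : Equiv.Perm (Fin 3) := ⟨![2,1,0], ![2,1,0], by decide, by decide⟩

/-- `s_n(α;β)`: the number of permutations of `{1,…,n}` that avoid `α` and contain `β`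
exactly once. -/
noncomputable def sAvoidContain (α β : Equiv.Perm (Fin 3)) (n : ℕ) : ℕ :=
  Nat.card {π : Equiv.Perm (Fin n) // avoids α π ∧ containsOnce β π}

/-- `s_n(∅;{α,β})`: the number of permutations of `{1,…,n}` that contain each of `α` and `β`
exactly once. -/
noncomputable def sContainBoth (α β : Equiv.Perm (Fin 3)) (n : ℕ) : ℕ :=
  Nat.card {π : Equiv.Perm (Fin n) // containsOnce α π ∧ containsOnce β π}

/-- The twenty increasing triples of indices in `Fin 6`. -/
def triples6 : List (Fin 6 × Fin 6 × Fin 6) :=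
  [(0,1,2),(0,1,3),(0,1,4),(0,1,5),(0,2,3),(0,2,4),(0,2,5),(0,3,4),(0,3,5),(0,4,5),
   (1,2,3),(1,2,4),(1,2,5),(1,3,4),(1,3,5),(1,4,5),(2,3,4),(2,3,5),(2,4,5),(3,4,5)]

/-- Transitivity of the comparison bits `i<j`, `j<k`, `i<k`. -/
def trans3 (a b c : Bool) : Bool := if a = b then c == a else true

/-- There are two distinct triples that are monotone in the same direction `d`. -/
def twoMono (B : Fin 6 → Fin 6 → Bool) : Prop :=
  ∃ s ∈ triples6, ∃ t ∈ triples6, ∃ d : Bool, s ≠ t ∧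
    B s.1 s.2.1 = d ∧ B s.2.1 s.2.2 = d ∧ B t.1 t.2.1 = d ∧ B t.2.1 t.2.2 = d

instance (B : Fin 6 → Fin 6 → Bool) : Decidable (twoMono B) := by
  unfold twoMono; infer_instance

/-- Upper triangular table of comparison bits. -/
def table6 (a01 a02 a12 a03 a13 a23 a04 a14 a24 a34 a05 a15 a25 a35 a45 : Bool) :
    Fin 6 → Fin 6 → Bool :=
  ![![false, a01, a02, a03, a04, a05], ![false, false, a12, a13, a14, a15],
    ![false, false, false, a23, a24, a25], ![false, false, false, false, a34, a35],
    ![false, false, false, false, false, a45], ![false, false, false, false, false, false]]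

theorem key6 : ∀ a01 a02 a12, trans3 a01 a12 a02 = true →
    ∀ a03 a13 a23, (trans3 a01 a13 a03 && trans3 a02 a23 a03 && trans3 a12 a23 a13) = true →
    ∀ a04 a14 a24 a34, (trans3 a01 a14 a04 && trans3 a02 a24 a04 && trans3 a12 a24 a14 &&
      trans3 a03 a34 a04 && trans3 a13 a34 a14 && trans3 a23 a34 a24) = true →
    ∀ a05 a15 a25 a35 a45, (trans3 a01 a15 a05 && trans3 a02 a25 a05 && trans3 a12 a25 a15 &&
      trans3 a03 a35 a05 && trans3 a13 a35 a15 && trans3 a23 a35 a25 &&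
      trans3 a04 a45 a05 && trans3 a14 a45 a15 && trans3 a24 a45 a25 && trans3 a34 a45 a35) = true →
    twoMono (table6 a01 a02 a12 a03 a13 a23 a04 a14 a24 a34 a05 a15 a25 a35 a45) := by
  decide +kernel

theorem key_fun {n : ℕ} (v : Fin 6 → Fin n) (hv : Function.Injective v) :
    twoMono (fun i j => decide (i < j) && decide (v i < v j)) := by
  have tr : ∀ i j k : Fin 6, i < j → j < k →
      trans3 (decide (v i < v j)) (decide (v j < v k)) (decide (v i < v k)) = true := by
    intro i j k hij hjk
    have h1 : v i ≠ v j := hv.ne hij.ne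
    have h2 : v j ≠ v k := hv.ne hjk.ne
    unfold trans3
    rcases lt_or_gt_of_ne h1 with h1 | h1 <;> rcases lt_or_gt_of_ne h2 with h2 | h2
    · simp [h1, h2, h1.trans h2]
    · simp [h1, h2.le]
    · simp [h1.le, h2]
    · simp [h1.not_gt, h2.not_gt, (h2.trans h1).not_gt]
  have h := key6 (decide (v 0 < v 1)) (decide (v 0 < v 2)) (decide (v 1 < v 2))
    (tr 0 1 2 (by decide) (by decide))
    (decide (v 0 < v 3)) (decide (v 1 < v 3)) (decide (v 2 < v 3))
    (by simp only [Bool.and_eq_true]; refine ⟨⟨?_, ?_⟩, ?_⟩ <;> exact tr _ _ _ (by decide) (by decide))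
    (decide (v 0 < v 4)) (decide (v 1 < v 4)) (decide (v 2 < v 4)) (decide (v 3 < v 4))
    (by simp only [Bool.and_eq_true]
        refine ⟨⟨⟨⟨⟨?_, ?_⟩, ?_⟩, ?_⟩, ?_⟩, ?_⟩ <;> exact tr _ _ _ (by decide) (by decide))
    (decide (v 0 < v 5)) (decide (v 1 < v 5)) (decide (v 2 < v 5)) (decide (v 3 < v 5))
    (decide (v 4 < v 5))
    (by simp only [Bool.and_eq_true]
        refine ⟨⟨⟨⟨⟨⟨⟨⟨⟨?_, ?_⟩, ?_⟩, ?_⟩, ?_⟩, ?_⟩, ?_⟩, ?_⟩, ?_⟩, ?_⟩ <;>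
          exact tr _ _ _ (by decide) (by decide))
  convert h using 1
  funext i j
  fin_cases i <;> fin_cases j <;> simp [table6]

theorem triples6_lt : ∀ s ∈ triples6, s.1 < s.2.1 ∧ s.2.1 < s.2.2 := by decide +kernel

theorem occ_unique {n : ℕ} {α : Equiv.Perm (Fin 3)} {π : Equiv.Perm (Fin n)}
    (h : containsOnce α π) (f g : Fin 3 → Fin n)
    (hf : StrictMono f ∧ ∀ a b : Fin 3, α a < α b ↔ π (f a) < π (f b))
    (hg : StrictMono g ∧ ∀ a b : Fin 3, α a < α b ↔ π (g a) < π (g b)) : f = g := by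
  unfold containsOnce occCount at h
  have := (Nat.card_eq_one_iff_unique.mp h).1
  exact congrArg Subtype.val (Subsingleton.elim
    (⟨f, hf⟩ : {f : Fin 3 → Fin n // StrictMono f ∧ ∀ a b, α a < α b ↔ π (f a) < π (f b)}) ⟨g, hg⟩)

theorem strictMono3 {n : ℕ} {x y z : Fin n} (h1 : x < y) (h2 : y < z) :
    StrictMono ![x, y, z] := by
  rw [Fin.strictMono_iff_lt_succ]
  intro i
  fin_cases i <;> simp [h1, h2]

theorem occ123 {n : ℕ} {π : Equiv.Perm (Fin n)} {x y z : Fin n} (h1 : x < y) (h2 : y < z)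
    (h3 : π x < π y) (h4 : π y < π z) :
    StrictMono ![x, y, z] ∧
      ∀ a b : Fin 3, p123 a < p123 b ↔ π (![x, y, z] a) < π (![x, y, z] b) := by
  refine ⟨strictMono3 h1 h2, fun a b => ?_⟩
  have h5 := h3.trans h4
  fin_cases a <;> fin_cases b <;> simp [p123, h3, h4, h5, h3.not_gt, h4.not_gt, h5.not_gt]

theorem occ321 {n : ℕ} {π : Equiv.Perm (Fin n)} {x y z : Fin n} (h1 : x < y) (h2 : y < z)
    (h3 : π y < π x) (h4 : π z < π y) :
    StrictMono ![x, y, z] ∧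
      ∀ a b : Fin 3, p321 a < p321 b ↔ π (![x, y, z] a) < π (![x, y, z] b) := by
  refine ⟨strictMono3 h1 h2, fun a b => ?_⟩
  have h5 := h4.trans h3
  fin_cases a <;> fin_cases b <;> simp [p321, h3, h4, h5, h3.not_gt, h4.not_gt, h5.not_gt]

/-- `s_n(∅;{123,321}) = 0` for `n ≥ 6`. -/
theorem sContainBoth_123_321_eq_zero :
    ∀ n : ℕ, 6 ≤ n → sContainBoth p123 p321 n = 0 := by
  intro n hn
  unfold sContainBoth
  have : IsEmpty {π : Equiv.Perm (Fin n) // containsOnce p123 π ∧ containsOnce p321 π} := by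
    refine ⟨fun ⟨π, hi, hd⟩ => ?_⟩
    have hc : StrictMono (Fin.castLE hn) := Fin.strictMono_castLE hn
    obtain ⟨s, hs, t, ht, d, hst, b1, b2, b3, b4⟩ :=
      key_fun (fun i => π (Fin.castLE hn i)) (π.injective.comp hc.injective)
    obtain ⟨s1, s2⟩ := triples6_lt s hs
    obtain ⟨t1, t2⟩ := triples6_lt t ht
    obtain ⟨x, y, z⟩ := s
    obtain ⟨u, w, r⟩ := t
    dsimp only at s1 s2 t1 t2 b1 b2 b3 b4
    have e : ![Fin.castLE hn x, Fin.castLE hn y, Fin.castLE hn z] =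
        ![Fin.castLE hn u, Fin.castLE hn w, Fin.castLE hn r] := by
      have flip : ∀ {i j : Fin 6}, i < j → ¬ π (Fin.castLE hn i) < π (Fin.castLE hn j) →
          π (Fin.castLE hn j) < π (Fin.castLE hn i) := fun hij h =>
        lt_of_le_of_ne (not_lt.mp h) (fun hh => hij.ne' (hc.injective (π.injective hh)))
      simp only [s1, s2, t1, t2, decide_true, Bool.true_and] at b1 b2 b3 b4
      cases d
      · simp only [decide_eq_false_iff_not] at b1 b2 b3 b4
        exact occ_unique hd _ _ (occ321 (hc s1) (hc s2) (flip s1 b1) (flip s2 b2))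
          (occ321 (hc t1) (hc t2) (flip t1 b3) (flip t2 b4))
      · simp only [decide_eq_true_eq] at b1 b2 b3 b4
        exact occ_unique hi _ _ (occ123 (hc s1) (hc s2) b1 b2) (occ123 (hc t1) (hc t2) b3 b4)
    apply hst
    have e0 := hc.injective (congrFun e 0)
    have e1 := hc.injective (congrFun e 1)
    have e2 := hc.injective (congrFun e 2)
    rw [e0, e1, e2]
  exact Nat.card_of_isEmpty
end

section
/- For every n ≥ 5, the number of permutations of {1,…,n} avoiding 123 and containing 312 exactly once equals the number of permutations of {1,…,n} containing each of 123 and 312 exactly once; that is, s_n(123;312) = s_n(∅;{123,312}) for n ≥ 5 (both equal 2n−5). -/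
def O123 (n : ℕ) (f : ℕ → ℕ) (i j k : ℕ) : Prop := i < j ∧ j < k ∧ k < n ∧ f i < f j ∧ f j < f k
def O312 (n : ℕ) (f : ℕ → ℕ) (i j k : ℕ) : Prop := i < j ∧ j < k ∧ k < n ∧ f j < f k ∧ f k < f i

def None3 (O : ℕ → ℕ → ℕ → Prop) : Prop := ∀ i j k, ¬ O i j k
def One3 (O : ℕ → ℕ → ℕ → Prop) : Prop :=
  ∃ x y z, O x y z ∧ ∀ i j k, O i j k → i = x ∧ j = y ∧ k = z

def T1 (n i j : ℕ) : Prop := i = 1 ∨ (i = 0 ∧ 2 ≤ j ∧ j + 1 ≠ n)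
def T2 (n i j : ℕ) : Prop := j + 3 = n ∨ (j + 1 = n ∧ i + 3 ≠ n)
def T3 (i j : ℕ) : Prop := i = 0 ∨ (i = 2 ∧ j = 3)
def T4 (n i j : ℕ) : Prop := j + 1 = n ∨ (i = 1 ∧ j = 2)

theorem classA (n : ℕ) (hn : 4 ≤ n) (f : ℕ → ℕ)
    (hinj : ∀ i j, i < n → j < n → f i = f j → i = j)
    (p : ℕ) (hp : p + 1 < n) (hmin : ∀ i, i < n → i ≠ p → f p < f i)
    (h1 : None3 (O123 n f)) (h2 : One3 (O312 n f)) :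
    (∀ i j, i < j → j < n → (f i < f j ↔ T1 n i j)) ∨
    (∀ i j, i < j → j < n → (f i < f j ↔ T2 n i j)) := by
  have no : ∀ i j k, i < j → j < k → k < n → f i < f j → f j < f k → False :=
    fun i j k a b c d e => h1 i j k ⟨a, b, c, d, e⟩
  obtain ⟨x, y, z, ⟨hxy, hyz, hzn, hf1, hf2⟩, u⟩ := h2
  have u : ∀ i j k, i < j → j < k → k < n → f j < f k → f k < f i → i = x ∧ j = y ∧ k = z :=
    fun i j k a b c d e => u i j k ⟨a, b, c, d, e⟩
  have ne : ∀ i j, i < j → j < n → f i < f j ∨ f j < f i := by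
    intro i j a b
    have := hinj i j (by omega) b
    omega
  clear hinj h1
  have dec : ∀ i j, p < i → i < j → j < n → f j < f i := by
    intro i j a b c
    rcases ne i j b c with h | h
    · exact (no p i j a b c (hmin i (by omega) (by omega)) h).elim
    · exact h
  have pr : ∀ i k, i < p → p < k → k < n → f k < f i → i = x ∧ p = y ∧ k = z :=
    fun i k a b c d => u i p k a b c (hmin k c (by omega)) d
  have hy : y = p := by
    by_contra hne
    have pr' : ∀ i k, i < p → p < k → k < n → f i < f k := by
      intro i k a b c
      rcases ne i k (by omega) c with h | h
      · exact h
      · exact absurd (pr i k a b c h).2.1.symm hne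
    rcases lt_trichotomy z p with h | h | h
    · exact no y z (p+1) hyz (by omega) hp hf1 (pr' z (p+1) h (by omega) hp)
    · subst h; have := hmin y (by omega) (by omega); omega
    · rcases lt_trichotomy x p with h' | h' | h'
      · have := pr' x z h' h hzn; omega
      · subst h'; have := hmin z (by omega) (by omega); omega
      · have := dec y z (by omega) hyz hzn; omega
  subst hy
  have hz : z = n - 1 := by
    by_contra hne
    have := dec z (n-1) hyz (by omega) (by omega)
    have := pr x (n-1) hxy (by omega) (by omega) (by omega)
    omega
  have lt' : ∀ i k, i < y → y < k → k < n → ¬ (i = x ∧ k = z) → f i < f k := by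
    intro i k a b c d
    rcases ne i k (by omega) c with h | h
    · exact h
    · have := pr i k a b c h
      omega
  by_cases hc : y + 2 < n
  · left
    have dP : ∀ i j, i < j → j < y → f j < f i := by
      intro i j a b
      rcases ne i j a (by omega) with h | h
      · exact (no i j (y+1) a (by omega) hp h (lt' j (y+1) b (by omega) hp (by omega))).elim
      · exact h
    have hx : x = 0 := by
      by_contra hne
      have := dP 0 x (by omega) hxy
      have := u 0 y z (by omega) hyz hzn hf1 (by omega)
      omega
    have hy : y = 1 := by
      by_contra hne
      have h3 := dP 0 1 (by omega) (by omega)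
      have h4 := lt' 1 z (by omega) hyz hzn (by omega)
      have := u 0 1 z (by omega) (by omega) hzn h4 (hx ▸ hf2)
      omega
    subst hx hy hz
    intro i j hij hj
    unfold T1
    by_cases c1 : i = 1
    · subst c1
      have := hmin j hj (by omega)
      simp [this]
    by_cases c0 : i = 0
    · subst c0
      by_cases c2 : j = 1
      · subst c2; constructor <;> intro <;> omega
      by_cases c3 : j + 1 = n
      · have : j = n - 1 := by omega
        subst this; constructor <;> intro <;> omega
      · have := lt' 0 j (by omega) (by omega) hj (by omega)
        constructor <;> intro <;> omega
    · have := dec i j (by omega) hij hj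
      constructor <;> intro <;> omega
  · right
    have hyn : y = n - 2 := by omega
    have hx : x = n - 3 := by
      by_contra hne
      have h4 := lt' (n-3) (n-1) (by omega) (by omega) (by omega) (by omega)
      have := u x (n-3) (n-1) (by omega) (by omega) (by omega) h4 (by rw [← hz]; exact hf2)
      omega
    have dP : ∀ i j, i < j → j < n - 3 → f j < f i := by
      intro i j a b
      rcases ne i j a (by omega) with h | h
      · exact (no i j (n-1) a (by omega) (by omega) h
          (lt' j (n-1) (by omega) (by omega) (by omega) (by omega))).elim
      · exact h
    intro i j hij hj
    unfold T2
    by_cases c1 : j = y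
    · have := hmin i (by omega) (by omega)
      rw [c1]; constructor <;> intro <;> omega
    by_cases c2 : j = z
    · rw [c2]
      by_cases c3 : i = x
      · rw [c3]; constructor <;> intro <;> omega
      by_cases c4 : i = y
      · rw [c4]; constructor <;> intro <;> omega
      have := lt' i z (by omega) (by omega) hzn (by omega)
      constructor <;> intro <;> omega
    by_cases c3 : j = x
    · have := lt' i z (by omega) (by omega) hzn (by omega)
      rw [c3]; constructor <;> intro <;> omega
    · have := dP i j hij (by omega)
      constructor <;> intro <;> omega

theorem classB (n : ℕ) (hn : 6 ≤ n) (f : ℕ → ℕ)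
    (hinj : ∀ i j, i < n → j < n → f i = f j → i = j)
    (p : ℕ) (hp : p + 1 < n) (hmin : ∀ i, i < n → i ≠ p → f p < f i)
    (h1 : One3 (O123 n f)) (h2 : One3 (O312 n f)) :
    (∀ i j, i < j → j < n → (f i < f j ↔ T3 i j)) ∨
    (∀ i j, i < j → j < n → (f i < f j ↔ T4 n i j)) := by
  obtain ⟨a, b, c, ⟨hab, hbc, hcn, hg1, hg2⟩, v⟩ := h1
  have v : ∀ i j k, i < j → j < k → k < n → f i < f j → f j < f k → i = a ∧ j = b ∧ k = c :=
    fun i j k a b c d e => v i j k ⟨a, b, c, d, e⟩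
  obtain ⟨x, y, z, ⟨hxy, hyz, hzn, hf1, hf2⟩, u⟩ := h2
  have u : ∀ i j k, i < j → j < k → k < n → f j < f k → f k < f i → i = x ∧ j = y ∧ k = z :=
    fun i j k a b c d e => u i j k ⟨a, b, c, d, e⟩
  have ne : ∀ i j, i < j → j < n → f i < f j ∨ f j < f i := by
    intro i j a b
    have := hinj i j (by omega) b
    omega
  clear hinj
  -- ascents after p
  have asc : ∀ i j, p < i → i < j → j < n → f i < f j → p = a ∧ i = b ∧ j = c := by
    intro i j h1 h2 h3 h
    exact v p i j h1 h2 h3 (hmin i (by omega) (by omega)) h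
  have pr : ∀ i k, i < p → p < k → k < n → f k < f i → i = x ∧ p = y ∧ k = z :=
    fun i k a b c d => u i p k a b c (hmin k c (by omega)) d
  by_cases hp0 : p = 0
  · subst hp0
    left
    have ha : a = 0 := by
      by_contra hne
      have := asc b c (by omega) hbc hcn hg2
      omega
    subst ha
    have hx0 : x ≠ 0 := by
      rintro rfl
      have := hmin z hzn (by omega)
      omega
    have hyb := asc y z (by omega) hyz hzn hf1
    obtain ⟨-, rfl, rfl⟩ := hyb
    have dec : ∀ i j, 0 < i → i < j → j < n → ¬ (i = y ∧ j = z) → f j < f i := by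
      intro i j h1 h2 h3 h4
      rcases ne i j h2 h3 with h | h
      · have := asc i j h1 h2 h3 h; omega
      · exact h
    have big : ∀ i, 0 < i → i < y → i = x := by
      intro i h1 h2
      have := dec i z h1 (by omega) hzn (by omega)
      have := u i y z h2 hyz hzn hf1 this
      omega
    have hx1 : x = 1 := by
      by_contra hne
      have := big 1 (by omega) (by omega)
      omega
    have hy2 : y = 2 := by
      by_contra hne
      have := big 2 (by omega) (by omega)
      omega
    have hz3 : z = 3 := by
      by_contra hne
      have := dec 3 z (by omega) (by omega) hzn (by omega)
      have := dec y 3 (by omega) (by omega) (by omega) (by omega)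
      omega
    subst hx1 hy2 hz3
    intro i j hij hj
    unfold T3
    by_cases c0 : i = 0
    · subst c0
      have := hmin j hj (by omega)
      simp [this]
    by_cases c2 : i = 2 ∧ j = 3
    · obtain ⟨rfl, rfl⟩ := c2
      simp [hf1]
    · have := dec i j (by omega) hij hj c2
      constructor <;> intro <;> omega
  by_cases hq : ∃ i k, i < p ∧ p < k ∧ k < n ∧ f k < f i
  · exfalso
    have hq' : x < p ∧ p = y ∧ p < z := by
      obtain ⟨i, k, h1, h2, h3, h4⟩ := hq
      have := pr i k h1 h2 h3 h4
      omega
    obtain ⟨hxp, hpy, hpz⟩ := hq'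
    subst hpy
    have lt' : ∀ i k, i < p → p < k → k < n → ¬ (i = x ∧ k = z) → f i < f k := by
      intro i k a b c d
      rcases ne i k (by omega) c with h | h
      · exact h
      · have := pr i k a b c h
        omega
    -- no ascent after p
    have dec : ∀ i j, p < i → i < j → j < n → f j < f i := by
      intro i j h1 h2 h3
      rcases ne i j h2 h3 with h | h
      swap
      · exact h
      exfalso
      have e := asc i j h1 h2 h3 h
      by_cases hiz : i = z
      · subst hiz
        by_cases hP : p = 1
        · -- another element after p, not i or j
          have : ∃ k, p < k ∧ k < n ∧ k ≠ i ∧ k ≠ j := by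
            by_cases k2 : 2 ≠ i ∧ 2 ≠ j
            · exact ⟨2, by omega, by omega, k2.1, k2.2⟩
            by_cases k3 : 3 ≠ i ∧ 3 ≠ j
            · exact ⟨3, by omega, by omega, k3.1, k3.2⟩
            exact ⟨4, by omega, by omega, by omega, by omega⟩
          obtain ⟨k, k1, k2, k3, k4⟩ := this
          have nasc : ∀ i' j', p < i' → i' < j' → j' < n → ¬ (i' = i ∧ j' = j) → f j' < f i' := by
            intro i' j' a1 a2 a3 a4
            rcases ne i' j' a2 a3 with h' | h'
            · have := asc i' j' a1 a2 a3 h'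
              omega
            · exact h'
          have xk := lt' x k hxp k1 k2 (by omega)
          rcases lt_trichotomy k i with g | g | g
          · have := nasc k j k1 (by omega) h3 (by omega)
            have := u k i j g h2 h3 h this
            omega
          · omega
          · have := nasc i k h1 (by omega) k2 (by omega)
            omega
        · -- another element before p
          have : ∃ k, k < p ∧ k ≠ x := by
            by_cases k0 : x = 0
            · exact ⟨1, by omega, by omega⟩
            · exact ⟨0, by omega, by omega⟩
          obtain ⟨k, k1, k2⟩ := this
          have := v k i j (by omega) h2 h3 (lt' k i k1 h1 (by omega) (by omega)) h
          omega
      · have := v x i j (by omega) h2 h3 (lt' x i hxp h1 (by omega) (by omega)) h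
        omega
    have hz : z = n - 1 := by
      by_contra hne
      have := dec z (n-1) hyz (by omega) (by omega)
      have := pr x (n-1) hxy (by omega) (by omega) (by omega)
      omega
    -- x is last before p
    have hx : x + 1 = p := by
      by_contra hne
      have h4 := lt' (p-1) z (by omega) hpz hzn (by omega)
      have := u x (p-1) z (by omega) (by omega) hzn h4 hf2
      omega
    have hbp : b < p := by
      rcases lt_trichotomy b p with h | h | h
      · exact h
      · subst h
        have := hmin a (by omega) (by omega)
        omega
      · have := dec b c h hbc hcn
        omega
    by_cases hbx : b = x
    · -- a, x, then p, then after
      have hcp : ∀ k, p < k → k + 1 < n → k = c := by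
        intro k k1 k2
        have h4 := lt' b k hbp k1 (by omega) (by omega)
        exact (v a b k hab (by omega) (by omega) hg1 h4).2.2
      have hap : ∀ k, k < x → k = a := by
        intro k k1
        by_cases hp2 : p + 2 < n
        · have h5 := lt' k z (by omega) hpz hzn (by omega)
          have h4 := lt' x (p+1) hxp (by omega) hp (by omega)
          exact (v k x (p+1) k1 (by omega) hp (by omega) h4).1
        · -- c can only be z
          have hcp' : c ≠ p := by
            rintro rfl
            have := hmin b (by omega) (by omega)
            omega
          have : c = z := by omega
          subst this hbx
          omega
      by_cases g : p + 3 < n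
      · have e1 := hcp (p+1) (by omega) (by omega)
        have e2 := hcp (p+2) (by omega) (by omega)
        omega
      · have e1 := hap 0 (by omega)
        have e2 := hap 1 (by omega)
        omega
    · have h4 := lt' b z hbp hpz hzn (by omega)
      have e := v a b z hab (by omega) hzn hg1 h4
      have e' := v a b x hab (by omega) (by omega) hg1 (by omega)
      omega
  · right
    have lt' : ∀ i k, i < p → p < k → k < n → f i < f k := by
      intro i k h1 h2 h3
      rcases ne i k (by omega) h3 with h | h
      · exact h
      · exact (hq ⟨i, k, h1, h2, h3, h⟩).elim
    have dec : ∀ i j, p < i → i < j → j < n → f j < f i := by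
      intro i j h1 h2 h3
      rcases ne i j h2 h3 with h | h
      swap
      · exact h
      exfalso
      have e := asc i j h1 h2 h3 h
      have e' := v 0 i j (by omega) h2 h3 (lt' 0 i (by omega) h1 (by omega)) h
      omega
    have hbp : b < p := by
      rcases lt_trichotomy b p with h | h | h
      · exact h
      · subst h
        have := hmin a (by omega) (by omega)
        omega
      · have := dec b c h hbc hcn
        omega
    have hcp : ∀ k, p < k → k < n → k = c := by
      intro k k1 k2
      have h4 := lt' b k hbp k1 k2
      exact (v a b k hab (by omega) k2 hg1 h4).2.2
    have hcn' : c = n - 1 := (hcp (n-1) (by omega) (by omega)).symm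
    have hpn : p = n - 2 := by
      have := hcp (p+1) (by omega) hp
      omega
    have dP : ∀ i j, i < j → j < p → ¬ (i = a ∧ j = b) → f j < f i := by
      intro i j h1 h2 h3
      rcases ne i j h1 (by omega) with h | h
      · have := v i j c h1 (by omega) hcn h (lt' j c h2 (by omega) hcn)
        omega
      · exact h
    have hzp : z < p := by
      rcases lt_trichotomy z p with h | h | h
      · exact h
      · have := hmin y (by omega) (by omega)
        rw [h] at hf1
        omega
      · have hxp : x < p := by omega
        have := lt' x z hxp h hzn
        omega
    have hyz' : y = a ∧ z = b := by
      by_contra hne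
      have := dP y z hyz hzp hne
      omega
    obtain ⟨rfl, rfl⟩ := hyz'
    have big : ∀ i, i < y → i = x := by
      intro i h1
      have := dP i z (by omega) hbp (by omega)
      exact (u i y z h1 hyz hzn hf1 this).1
    have hx0 : x = 0 := by
      by_contra hne
      have := big 0 (by omega)
      omega
    have hy1 : y = 1 := by
      by_contra hne
      have := big 1 (by omega)
      omega
    have hz2 : z = 2 := by
      by_contra hne
      have := dP 2 z (by omega) hbp (by omega)
      have := dP y 2 (by omega) (by omega) (by omega)
      omega
    subst hx0 hy1 hz2
    intro i j hij hj
    unfold T4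
    by_cases c1 : j = p
    · have := hmin i (by omega) (by omega)
      rw [c1]; constructor <;> intro <;> omega
    by_cases c2 : j = c
    · have : f i < f j := by
        by_cases c3 : i = p
        · rw [c3]; exact hmin j hj (by omega)
        · exact lt' i j (by omega) (by omega) hj
      constructor <;> intro <;> omega
    by_cases c3 : i = 1 ∧ j = 2
    · obtain ⟨rfl, rfl⟩ := c3
      simp [hf1]
    · have := dP i j hij (by omega) c3
      constructor <;> intro <;> omega

def vf {n : ℕ} (π : Equiv.Perm (Fin n)) (i : ℕ) : ℕ := if h : i < n then (π ⟨i, h⟩ : ℕ) else 0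

theorem vf_fin {n : ℕ} (π : Equiv.Perm (Fin n)) (i : Fin n) : vf π i = π i := by
  simp [vf]

theorem vf_inj {n : ℕ} (π : Equiv.Perm (Fin n)) (i j : ℕ) (hi : i < n) (hj : j < n)
    (h : vf π i = vf π j) : i = j := by
  simp only [vf, hi, hj, dif_pos] at h
  simpa using π.injective (Fin.ext h)

theorem occ_equiv {n : ℕ} (α : Equiv.Perm (Fin 3)) (π : Equiv.Perm (Fin n))
    (O : ℕ → ℕ → ℕ → Prop) (hOn : ∀ i j k, O i j k → i < n ∧ j < n ∧ k < n)
    (hO : ∀ f : Fin 3 → Fin n,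
      (StrictMono f ∧ ∀ a b : Fin 3, α a < α b ↔ π (f a) < π (f b)) ↔ O (f 0) (f 1) (f 2)) :
    Nonempty ({f : Fin 3 → Fin n // StrictMono f ∧ ∀ a b : Fin 3, α a < α b ↔ π (f a) < π (f b)}
      ≃ {t : ℕ × ℕ × ℕ // O t.1 t.2.1 t.2.2}) := by
  refine ⟨Equiv.ofBijective (fun f => ⟨((f.1 0 : ℕ), (f.1 1 : ℕ), (f.1 2 : ℕ)), (hO f.1).1 f.2⟩) ?_⟩
  constructor
  · rintro ⟨f, hf⟩ ⟨g, hg⟩ h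
    simp only [Subtype.mk.injEq, Prod.mk.injEq] at h
    apply Subtype.ext
    funext a
    fin_cases a
    · exact Fin.ext h.1
    · exact Fin.ext h.2.1
    · exact Fin.ext h.2.2
  · rintro ⟨⟨i, j, k⟩, h⟩
    have hb := hOn i j k h
    refine ⟨⟨![⟨i, hb.1⟩, ⟨j, hb.2.1⟩, ⟨k, hb.2.2⟩], (hO _).2 ?_⟩, ?_⟩
    · simpa using h
    · simp

theorem occ_zero {n : ℕ} (α : Equiv.Perm (Fin 3)) (π : Equiv.Perm (Fin n))
    (O : ℕ → ℕ → ℕ → Prop) (hOn : ∀ i j k, O i j k → i < n ∧ j < n ∧ k < n)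
    (hO : ∀ f : Fin 3 → Fin n,
      (StrictMono f ∧ ∀ a b : Fin 3, α a < α b ↔ π (f a) < π (f b)) ↔ O (f 0) (f 1) (f 2)) :
    occCount α π = 0 ↔ None3 O := by
  obtain ⟨e⟩ := occ_equiv α π O hOn hO
  have : Finite {t : ℕ × ℕ × ℕ // O t.1 t.2.1 t.2.2} := Finite.of_equiv _ e
  unfold occCount
  rw [Nat.card_congr e, Finite.card_eq_zero_iff, isEmpty_subtype]
  simp [None3]

theorem occ_one {n : ℕ} (α : Equiv.Perm (Fin 3)) (π : Equiv.Perm (Fin n))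
    (O : ℕ → ℕ → ℕ → Prop) (hOn : ∀ i j k, O i j k → i < n ∧ j < n ∧ k < n)
    (hO : ∀ f : Fin 3 → Fin n,
      (StrictMono f ∧ ∀ a b : Fin 3, α a < α b ↔ π (f a) < π (f b)) ↔ O (f 0) (f 1) (f 2)) :
    occCount α π = 1 ↔ One3 O := by
  obtain ⟨e⟩ := occ_equiv α π O hOn hO
  unfold occCount
  rw [Nat.card_congr e, Nat.card_eq_one_iff_exists]
  constructor
  · rintro ⟨⟨⟨x, y, z⟩, h⟩, hu⟩
    refine ⟨x, y, z, h, fun i j k hh => ?_⟩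
    have := hu ⟨(i, j, k), hh⟩
    simpa using this
  · rintro ⟨x, y, z, h, hu⟩
    refine ⟨⟨(x, y, z), h⟩, ?_⟩
    rintro ⟨⟨i, j, k⟩, hh⟩
    simpa using hu i j k hh

theorem strictMono3_s11 {n : ℕ} (f : Fin 3 → Fin n) : StrictMono f ↔ f 0 < f 1 ∧ f 1 < f 2 := by
  rw [Fin.strictMono_iff_lt_succ]
  simp [Fin.forall_fin_succ]

theorem h123 {n : ℕ} (π : Equiv.Perm (Fin n)) (f : Fin 3 → Fin n) :
      (StrictMono f ∧ ∀ a b : Fin 3, p123 a < p123 b ↔ π (f a) < π (f b)) ↔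
      O123 n (vf π) (f 0) (f 1) (f 2) := by
  unfold O123
  rw [strictMono3_s11]
  simp only [vf_fin, Fin.forall_fin_succ, p123]
  simp
  simp only [Fin.lt_def, Fin.le_def]
  have := (f 2).2
  omega

theorem h312 {n : ℕ} (π : Equiv.Perm (Fin n)) (f : Fin 3 → Fin n) :
      (StrictMono f ∧ ∀ a b : Fin 3, p312 a < p312 b ↔ π (f a) < π (f b)) ↔
      O312 n (vf π) (f 0) (f 1) (f 2) := by
  unfold O312
  rw [strictMono3_s11]
  simp only [vf_fin, Fin.forall_fin_succ, p312]
  simp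
  simp only [Fin.lt_def, Fin.le_def]
  have := (f 2).2
  omega

theorem O123_lt (n : ℕ) (f : ℕ → ℕ) (i j k : ℕ) (h : O123 n f i j k) : i < n ∧ j < n ∧ k < n := by
  unfold O123 at h; omega
theorem O312_lt (n : ℕ) (f : ℕ → ℕ) (i j k : ℕ) (h : O312 n f i j k) : i < n ∧ j < n ∧ k < n := by
  unfold O312 at h; omega

def PA (n : ℕ) (f : ℕ → ℕ) : Prop := None3 (O123 n f) ∧ One3 (O312 n f)
def PB (n : ℕ) (f : ℕ → ℕ) : Prop := One3 (O123 n f) ∧ One3 (O312 n f)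

noncomputable def cnt (P : ℕ → (ℕ → ℕ) → Prop) (n : ℕ) : ℕ :=
  Set.ncard {π : Equiv.Perm (Fin n) | P n (vf π)}

theorem A_eq (n : ℕ) : sAvoidContain p123 p312 n = cnt PA n := by
  unfold sAvoidContain cnt
  rw [← Nat.card_coe_set_eq]
  refine Nat.card_congr (Equiv.subtypeEquivRight fun π => ?_)
  exact and_congr (occ_zero _ _ _ (O123_lt _ _) (h123 π)) (occ_one _ _ _ (O312_lt _ _) (h312 π))

theorem B_eq (n : ℕ) : sContainBoth p123 p312 n = cnt PB n := by
  unfold sContainBoth cnt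
  rw [← Nat.card_coe_set_eq]
  refine Nat.card_congr (Equiv.subtypeEquivRight fun π => ?_)
  exact and_congr (occ_one _ _ _ (O123_lt _ _) (h123 π)) (occ_one _ _ _ (O312_lt _ _) (h312 π))

/-- append a new minimum at the end -/
def extF {n : ℕ} (π : Equiv.Perm (Fin n)) : Fin (n+1) → Fin (n+1) :=
  fun i => if h : (i : ℕ) < n then (π ⟨i, h⟩).succ else 0

theorem extF_inj {n : ℕ} (π : Equiv.Perm (Fin n)) : Function.Injective (extF π) := by
  intro i j h
  unfold extF at h
  split_ifs at h with h1 h2 h2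
  · have := π.injective (Fin.succ_injective _ h)
    simp at this
    exact Fin.ext this
  · exact (Fin.succ_ne_zero _ h).elim
  · exact (Fin.succ_ne_zero _ h.symm).elim
  · apply Fin.ext; omega

noncomputable def ext {n : ℕ} (π : Equiv.Perm (Fin n)) : Equiv.Perm (Fin (n+1)) :=
  Equiv.ofBijective (extF π) (Finite.injective_iff_bijective.1 (extF_inj π))

theorem vf_ext {n : ℕ} (π : Equiv.Perm (Fin n)) (i : ℕ) :
    vf (ext π) i = if i < n then vf π i + 1 else 0 := by
  unfold vf ext
  simp only [Equiv.ofBijective_apply, extF]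
  by_cases h : i < n
  · simp [h, Nat.lt_succ_of_lt h]
  · by_cases h' : i < n + 1 <;> simp [h, h']

theorem vf_ext_inj {n : ℕ} {π σ : Equiv.Perm (Fin n)} (h : ∀ i, i < n → vf π i = vf σ i) : π = σ := by
  ext i
  have := h i i.2
  rwa [vf_fin, vf_fin] at this

theorem ext_surj {n : ℕ} (σ : Equiv.Perm (Fin (n+1))) (h : vf σ n = 0) : ∃ π, ext π = σ := by
  have hl : σ (Fin.last n) = 0 := by
    apply Fin.ext
    rw [← vf_fin]; simpa using h
  have hne : ∀ i : Fin n, σ i.castSucc ≠ 0 := by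
    intro i hi
    have := σ.injective (hi.trans hl.symm)
    exact (Fin.castSucc_lt_last i).ne this
  have hinj : Function.Injective (fun i : Fin n => (σ i.castSucc).pred (hne i)) := by
    intro i j hij
    have := (Fin.pred_inj).1 hij
    exact Fin.castSucc_injective _ (σ.injective this)
  refine ⟨Equiv.ofBijective _ (Finite.injective_iff_bijective.1 hinj), ?_⟩
  ext i
  simp only [ext, Equiv.ofBijective_apply, extF]
  split_ifs with h'
  · simp
  · have : i = Fin.last n := by apply Fin.ext; simp; omega
    rw [this, hl]

def extf (n : ℕ) (f : ℕ → ℕ) (i : ℕ) : ℕ := if i < n then f i + 1 else 0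

theorem O123_ext (n : ℕ) (f : ℕ → ℕ) (i j k : ℕ) : O123 (n+1) (extf n f) i j k ↔ O123 n f i j k := by
  unfold O123 extf
  split_ifs <;> omega
theorem O312_ext (n : ℕ) (f : ℕ → ℕ) (i j k : ℕ) : O312 (n+1) (extf n f) i j k ↔ O312 n f i j k := by
  unfold O312 extf
  split_ifs <;> omega

theorem PA_ext (n : ℕ) (f : ℕ → ℕ) : PA (n+1) (extf n f) ↔ PA n f := by
  simp [PA, None3, One3, O123_ext, O312_ext]
theorem PB_ext (n : ℕ) (f : ℕ → ℕ) : PB (n+1) (extf n f) ↔ PB n f := by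
  simp [PB, One3, O123_ext, O312_ext]

theorem order_unique {n : ℕ} {π σ : Equiv.Perm (Fin n)} (T : ℕ → ℕ → Prop)
    (h1 : ∀ i j, i < j → j < n → (vf π i < vf π j ↔ T i j))
    (h2 : ∀ i j, i < j → j < n → (vf σ i < vf σ j ↔ T i j)) : π = σ := by
  have key : ∀ i j : Fin n, π i < π j ↔ σ i < σ j := by
    have base : ∀ i j : Fin n, i < j → (π i < π j ↔ σ i < σ j) := by
      intro i j hij
      have a := h1 i j hij j.2
      have b := h2 i j hij j.2
      rw [vf_fin, vf_fin] at a b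
      exact a.trans b.symm
    intro i j
    rcases lt_trichotomy i j with h | h | h
    · exact base i j h
    · subst h; simp
    · have := base j i h
      have n1 : π i ≠ π j := fun e => h.ne' (π.injective e)
      have n2 : σ i ≠ σ j := fun e => h.ne' (σ.injective e)
      constructor
      · intro a; by_contra b
        exact absurd (this.2 (lt_of_le_of_ne (not_lt.1 b) n2.symm)) a.asymm
      · intro a; by_contra b
        exact absurd (this.1 (lt_of_le_of_ne (not_lt.1 b) n1.symm)) a.asymm
  let e : Fin n ≃o Fin n :=
    { toEquiv := π.symm.trans σ
      map_rel_iff' := by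
        intro a b
        have := key (π.symm b) (π.symm a)
        simp only [Equiv.apply_symm_apply] at this
        simp only [Equiv.trans_apply]
        rw [← not_lt, ← not_lt, this] }
  have he : e = OrderIso.refl _ := Subsingleton.elim _ _
  ext i
  have := congrArg (fun g : Fin n ≃o Fin n => g (π i)) he
  have h3 : σ (π.symm (π i)) = π i := this
  rw [Equiv.symm_apply_apply] at h3
  rw [h3]

theorem cnt_succ (P : ℕ → (ℕ → ℕ) → Prop) (n : ℕ)
    (hext : ∀ f, P (n+1) (extf n f) ↔ P n f)
    (s t : Equiv.Perm (Fin (n+1))) (hst : s ≠ t)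
    (hs : vf s n ≠ 0) (ht : vf t n ≠ 0) (hPs : P (n+1) (vf s)) (hPt : P (n+1) (vf t))
    (hcl : ∀ σ : Equiv.Perm (Fin (n+1)), vf σ n ≠ 0 → P (n+1) (vf σ) → σ = s ∨ σ = t) :
    cnt P (n+1) = cnt P n + 2 := by
  unfold cnt
  have hvf : ∀ π : Equiv.Perm (Fin n), vf (ext π) = extf n (vf π) := fun π => funext (vf_ext π)
  have hset : {π : Equiv.Perm (Fin (n+1)) | P (n+1) (vf π)} =
      (ext '' {π : Equiv.Perm (Fin n) | P n (vf π)}) ∪ {s, t} := by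
    ext σ
    simp only [Set.mem_ofPred_eq, Set.mem_union, Set.mem_image, Set.mem_insert_iff,
      Set.mem_singleton_iff]
    constructor
    · intro h
      by_cases h0 : vf σ n = 0
      · left
        obtain ⟨π, rfl⟩ := ext_surj σ h0
        refine ⟨π, ?_, rfl⟩
        rwa [hvf, hext] at h
      · exact Or.inr (hcl σ h0 h)
    · rintro (⟨π, h, rfl⟩ | rfl | rfl)
      · rwa [hvf, hext]
      · exact hPs
      · exact hPt
  have hinj : Function.Injective (ext : Equiv.Perm (Fin n) → _) := by
    intro π σ h
    apply vf_ext_inj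
    intro i hi
    have := congrArg (fun τ => vf τ i) h
    simp only [vf_ext, hi, if_true] at this
    omega
  rw [hset, Set.ncard_union_eq _ (Set.toFinite _) (Set.toFinite _),
    Set.ncard_image_of_injective _ hinj, Set.ncard_pair hst]
  rw [Set.disjoint_left]
  rintro _ ⟨π, -, rfl⟩ h
  have h0 : vf (ext π) n = 0 := by simp [vf_ext]
  rcases h with h | h
  · exact hs (h ▸ h0)
  · exact ht (h ▸ h0)

theorem exists_min {n : ℕ} (σ : Equiv.Perm (Fin (n+1))) (h : vf σ n ≠ 0) :
    ∃ p, p + 1 < n + 1 ∧ ∀ i, i < n + 1 → i ≠ p → vf σ p < vf σ i := by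
  have h0 : vf σ (σ.symm 0) = 0 := by rw [vf_fin]; simp
  refine ⟨(σ.symm 0 : Fin (n+1)), ?_, ?_⟩
  · have := (σ.symm 0).2
    have : (σ.symm 0 : ℕ) ≠ n := by
      intro e; rw [e] at h0; exact h h0
    omega
  · intro i hi hne
    rw [h0]
    by_contra hh
    have : vf σ i = 0 := by omega
    exact hne (vf_inj σ _ _ hi (σ.symm 0).2 (by rw [this, h0]))

theorem exists_perm (n : ℕ) (g : ℕ → ℕ) (hlt : ∀ i, i < n → g i < n)
    (hinj : ∀ i j, i < j → j < n → g i ≠ g j) :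
    ∃ π : Equiv.Perm (Fin n), ∀ i, i < n → vf π i = g i := by
  have hi : Function.Injective (fun i : Fin n => (⟨g i, hlt i i.2⟩ : Fin n)) := by
    intro i j h
    simp only [Fin.mk.injEq] at h
    rcases lt_trichotomy i j with h' | h' | h'
    · exact (hinj i j h' j.2 h).elim
    · exact h'
    · exact (hinj j i h' i.2 h.symm).elim
  refine ⟨Equiv.ofBijective _ (Finite.injective_iff_bijective.1 hi), ?_⟩
  intro i hi
  simp [vf, hi]

def g1 (n i : ℕ) : ℕ := if i = 0 then 2 else if i = 1 then 0 else if i + 1 = n then 1 else n + 1 - i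
def g2 (n i : ℕ) : ℕ :=
  if i + 3 < n then n - 3 - i else if i + 3 = n then n - 1 else if i + 2 = n then 0 else n - 2
def g3 (n i : ℕ) : ℕ :=
  if i = 0 then 0 else if i = 1 then n - 1 else if i = 2 then n - 3 else if i = 3 then n - 2 else n - i
def g4 (n i : ℕ) : ℕ :=
  if i = 0 then n - 2 else if i = 1 then n - 4 else if i = 2 then n - 3
  else if i + 1 = n then n - 1 else n - 2 - i

theorem g1_T (n : ℕ) (hn : 4 ≤ n) (i j : ℕ) (hij : i < j) (hj : j < n) :
    g1 n i ≠ g1 n j ∧ (g1 n i < g1 n j ↔ T1 n i j) := by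
  unfold g1 T1; split_ifs <;> omega
theorem g2_T (n : ℕ) (hn : 4 ≤ n) (i j : ℕ) (hij : i < j) (hj : j < n) :
    g2 n i ≠ g2 n j ∧ (g2 n i < g2 n j ↔ T2 n i j) := by
  unfold g2 T2; split_ifs <;> omega
theorem g3_T (n : ℕ) (hn : 6 ≤ n) (i j : ℕ) (hij : i < j) (hj : j < n) :
    g3 n i ≠ g3 n j ∧ (g3 n i < g3 n j ↔ T3 i j) := by
  unfold g3 T3; split_ifs <;> omega
theorem g4_T (n : ℕ) (hn : 6 ≤ n) (i j : ℕ) (hij : i < j) (hj : j < n) :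
    g4 n i ≠ g4 n j ∧ (g4 n i < g4 n j ↔ T4 n i j) := by
  unfold g4 T4; split_ifs <;> omega

theorem mkPerm (n : ℕ) (g : ℕ → ℕ) (T : ℕ → ℕ → Prop) (hlt : ∀ i, i < n → g i < n)
    (hT : ∀ i j, i < j → j < n → g i ≠ g j ∧ (g i < g j ↔ T i j)) :
    ∃ π : Equiv.Perm (Fin n), (∀ i, i < n → vf π i = g i) ∧
      ∀ i j, i < j → j < n → (vf π i < vf π j ↔ T i j) := by
  obtain ⟨π, h⟩ := exists_perm n g hlt (fun i j a b => (hT i j a b).1)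
  refine ⟨π, h, fun i j a b => ?_⟩
  rw [h i (a.trans b), h j b]
  exact (hT i j a b).2

/-- occurrences in terms of the ascent relation -/
theorem O123_T {n : ℕ} {π : Equiv.Perm (Fin n)} {T : ℕ → ℕ → Prop}
    (hT : ∀ i j, i < j → j < n → (vf π i < vf π j ↔ T i j)) (i j k : ℕ) :
    O123 n (vf π) i j k ↔ i < j ∧ j < k ∧ k < n ∧ T i j ∧ T j k := by
  unfold O123
  constructor
  · rintro ⟨a, b, c, d, e⟩
    exact ⟨a, b, c, (hT i j a (by omega)).1 d, (hT j k b c).1 e⟩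
  · rintro ⟨a, b, c, d, e⟩
    exact ⟨a, b, c, (hT i j a (by omega)).2 d, (hT j k b c).2 e⟩

theorem O312_T {n : ℕ} {π : Equiv.Perm (Fin n)} {T : ℕ → ℕ → Prop}
    (hT : ∀ i j, i < j → j < n → (vf π i < vf π j ↔ T i j)) (i j k : ℕ) :
    O312 n (vf π) i j k ↔ i < j ∧ j < k ∧ k < n ∧ T j k ∧ ¬ T i k := by
  unfold O312
  constructor
  · rintro ⟨a, b, c, d, e⟩
    refine ⟨a, b, c, (hT j k b c).1 d, fun h => ?_⟩
    have := (hT i k (by omega) c).2 h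
    omega
  · rintro ⟨a, b, c, d, e⟩
    refine ⟨a, b, c, (hT j k b c).2 d, ?_⟩
    have h1 : ¬ vf π i < vf π k := fun h => e ((hT i k (by omega) c).1 h)
    have h2 : vf π i ≠ vf π k := fun h => by
      have := vf_inj π i k (by omega) c h
      omega
    omega

theorem stepA (n : ℕ) (hn : 3 ≤ n) : cnt PA (n+1) = cnt PA n + 2 := by
  obtain ⟨s, hs, hsT⟩ := mkPerm (n+1) (g1 (n+1)) (T1 (n+1))
    (by intro i hi; unfold g1; split_ifs <;> omega) (g1_T (n+1) (by omega))
  obtain ⟨t, ht, htT⟩ := mkPerm (n+1) (g2 (n+1)) (T2 (n+1))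
    (by intro i hi; unfold g2; split_ifs <;> omega) (g2_T (n+1) (by omega))
  have hsn := hs n (by omega)
  have htn := ht n (by omega)
  have hsn' : g1 (n+1) n = 1 := by unfold g1; split_ifs <;> omega
  have htn' : g2 (n+1) n = n - 1 := by unfold g2; split_ifs <;> omega
  refine cnt_succ PA n (PA_ext n) s t ?_ (by omega) (by omega) ?_ ?_ ?_
  · rintro rfl; omega
  · refine ⟨?_, 0, 1, n, ?_, ?_⟩
    · intro i j k; rw [O123_T hsT]; unfold T1; omega
    · rw [O312_T hsT]; unfold T1; omega
    · intro i j k; rw [O312_T hsT]; unfold T1; omega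
  · refine ⟨?_, n-2, n-1, n, ?_, ?_⟩
    · intro i j k; rw [O123_T htT]; unfold T2; omega
    · rw [O312_T htT]; unfold T2; omega
    · intro i j k; rw [O312_T htT]; unfold T2; omega
  · intro σ h0 hP
    obtain ⟨p, hp, hmin⟩ := exists_min σ h0
    rcases classA (n+1) (by omega) (vf σ) (vf_inj σ) p hp hmin hP.1 hP.2 with h | h
    · left; exact order_unique _ h hsT
    · right; exact order_unique _ h htT

theorem stepB (n : ℕ) (hn : 5 ≤ n) : cnt PB (n+1) = cnt PB n + 2 := by
  obtain ⟨s, hs, hsT⟩ := mkPerm (n+1) (g3 (n+1)) T3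
    (by intro i hi; unfold g3; split_ifs <;> omega) (g3_T (n+1) (by omega))
  obtain ⟨t, ht, htT⟩ := mkPerm (n+1) (g4 (n+1)) (T4 (n+1))
    (by intro i hi; unfold g4; split_ifs <;> omega) (g4_T (n+1) (by omega))
  have hsn := hs n (by omega)
  have htn := ht n (by omega)
  have hsn' : g3 (n+1) n = 1 := by unfold g3; split_ifs <;> omega
  have htn' : g4 (n+1) n = n := by unfold g4; split_ifs <;> omega
  refine cnt_succ PB n (PB_ext n) s t ?_ (by omega) (by omega) ?_ ?_ ?_
  · rintro rfl; omega
  · refine ⟨⟨0, 2, 3, ?_, ?_⟩, 1, 2, 3, ?_, ?_⟩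
    · rw [O123_T hsT]; unfold T3; omega
    · intro i j k; rw [O123_T hsT]; unfold T3; omega
    · rw [O312_T hsT]; unfold T3; omega
    · intro i j k; rw [O312_T hsT]; unfold T3; omega
  · refine ⟨⟨1, 2, n, ?_, ?_⟩, 0, 1, 2, ?_, ?_⟩
    · rw [O123_T htT]; unfold T4; omega
    · intro i j k; rw [O123_T htT]; unfold T4; omega
    · rw [O312_T htT]; unfold T4; omega
    · intro i j k; rw [O312_T htT]; unfold T4; omega
  · intro σ h0 hP
    obtain ⟨p, hp, hmin⟩ := exists_min σ h0
    rcases classB (n+1) (by omega) (vf σ) (vf_inj σ) p hp hmin hP.1 hP.2 with h | h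
    · left; exact order_unique _ h hsT
    · right; exact order_unique _ h htT


theorem bdd_one (n : ℕ) (O : ℕ → ℕ → ℕ → Prop) (hO : ∀ i j k, O i j k → i < n ∧ j < n ∧ k < n) :
    (∃ x : Fin n, ∃ y : Fin n, ∃ z : Fin n, O x y z ∧
      ∀ i j k : Fin n, O i j k → i = x ∧ j = y ∧ k = z) ↔ One3 O := by
  constructor
  · rintro ⟨x, y, z, h, hu⟩
    refine ⟨x, y, z, h, fun i j k h' => ?_⟩
    obtain ⟨a, b, c⟩ := hO i j k h'
    have := hu ⟨i, a⟩ ⟨j, b⟩ ⟨k, c⟩ h'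
    simpa [Fin.ext_iff] using this
  · rintro ⟨x, y, z, h, hu⟩
    obtain ⟨a, b, c⟩ := hO x y z h
    refine ⟨⟨x, a⟩, ⟨y, b⟩, ⟨z, c⟩, h, fun i j k h' => ?_⟩
    simpa [Fin.ext_iff] using hu i j k h'

theorem bdd_none (n : ℕ) (O : ℕ → ℕ → ℕ → Prop) (hO : ∀ i j k, O i j k → i < n ∧ j < n ∧ k < n) :
    (∀ i j k : Fin n, ¬ O i j k) ↔ None3 O := by
  constructor
  · intro h i j k h'
    obtain ⟨a, b, c⟩ := hO i j k h'
    exact h ⟨i, a⟩ ⟨j, b⟩ ⟨k, c⟩ h'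
  · intro h i j k
    exact h i j k

instance (n : ℕ) (f : ℕ → ℕ) (i j k : ℕ) : Decidable (O123 n f i j k) := by
  unfold O123; infer_instance
instance (n : ℕ) (f : ℕ → ℕ) (i j k : ℕ) : Decidable (O312 n f i j k) := by
  unfold O312; infer_instance
instance decA (n : ℕ) (f : ℕ → ℕ) : Decidable (PA n f) :=
  decidable_of_iff _ (and_congr (bdd_none n _ (O123_lt n f)) (bdd_one n _ (O312_lt n f)))

/-- the ten increasing triples below 5 -/
def tri5 : Finset (ℕ × ℕ × ℕ) :=
  ⟨[(0, 1, 2), (0, 1, 3), (0, 1, 4), (0, 2, 3), (0, 2, 4), (0, 3, 4), (1, 2, 3), (1, 2, 4),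
    (1, 3, 4), (2, 3, 4)], by decide⟩

theorem mem_tri5 (i j k : ℕ) (h1 : i < j) (h2 : j < k) (h3 : k < 5) : (i, j, k) ∈ tri5 := by
  have hi : i < 5 := by omega
  have hj : j < 5 := by omega
  interval_cases k <;> interval_cases j <;> interval_cases i <;> decide

theorem tri5_one (O : ℕ → ℕ → ℕ → Prop) [∀ i j k, Decidable (O i j k)]
    (hO : ∀ i j k, O i j k → i < j ∧ j < k ∧ k < 5) :
    (tri5.filter (fun t => O t.1 t.2.1 t.2.2)).card = 1 ↔ One3 O := by
  have hm : ∀ i j k, (i, j, k) ∈ tri5.filter (fun t => O t.1 t.2.1 t.2.2) ↔ O i j k := by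
    intro i j k
    rw [Finset.mem_filter]
    refine ⟨fun h => h.2, fun h => ⟨?_, h⟩⟩
    have := hO i j k h
    exact mem_tri5 i j k this.1 this.2.1 this.2.2
  rw [Finset.card_eq_one]
  constructor
  · rintro ⟨⟨x, y, z⟩, h⟩
    rw [h] at hm
    simp only [Finset.mem_singleton, Prod.mk.injEq] at hm
    exact ⟨x, y, z, (hm x y z).1 ⟨rfl, rfl, rfl⟩, fun i j k h' => (hm i j k).2 h'⟩
  · rintro ⟨x, y, z, h, hu⟩
    refine ⟨(x, y, z), ?_⟩
    ext ⟨i, j, k⟩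
    rw [hm, Finset.mem_singleton]
    simp only [Prod.mk.injEq]
    exact ⟨hu i j k, fun ⟨a, b, c⟩ => by rw [a, b, c]; exact h⟩

/-- evaluates the first argument before passing it on -/
def force (v : ℕ) (P : ℕ → Bool) : Bool :=
  if v = 0 then P 0 else if v = 1 then P 1 else if v = 2 then P 2 else if v = 3 then P 3
  else if v = 4 then P 4 else P v

theorem force_eq (v : ℕ) (P : ℕ → Bool) : force v P = P v := by
  unfold force
  split_ifs with h0 h1 h2 h3 h4 <;> first | rfl | simp_all

def tup (a b c d e i : ℕ) : ℕ :=
  if i = 0 then a else if i = 1 then b else if i = 2 then c else if i = 3 then d else e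

def testB (f : ℕ → ℕ) : Bool :=
  decide ((tri5.filter (fun t => O123 5 f t.1 t.2.1 t.2.2)).card = 1 ∧
    (tri5.filter (fun t => O312 5 f t.1 t.2.1 t.2.2)).card = 1)

def fastB (f : ℕ → ℕ) : Bool :=
  force (f 0) fun a => force (f 1) fun b => force (f 2) fun c => force (f 3) fun d =>
    force (f 4) fun e => testB (tup a b c d e)

theorem testB_iff (f : ℕ → ℕ) : testB f = true ↔ PB 5 f := by
  unfold testB
  rw [decide_eq_true_iff]
  exact and_congr
    (tri5_one (O123 5 f) (fun _ _ _ h => ⟨h.1, h.2.1, h.2.2.1⟩))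
    (tri5_one (O312 5 f) (fun _ _ _ h => ⟨h.1, h.2.1, h.2.2.1⟩))

theorem PB5_congr (f g : ℕ → ℕ) (h : ∀ i, i < 5 → f i = g i) : PB 5 f ↔ PB 5 g := by
  have e1 : O123 5 f = O123 5 g := by
    funext i j k
    apply propext
    unfold O123
    constructor <;> rintro ⟨a, b, c, d⟩ <;> refine ⟨a, b, c, ?_⟩ <;>
      have := h i (by omega) <;> have := h j (by omega) <;> have := h k c <;> omega
  have e2 : O312 5 f = O312 5 g := by
    funext i j k
    apply propext
    unfold O312
    constructor <;> rintro ⟨a, b, c, d⟩ <;> refine ⟨a, b, c, ?_⟩ <;>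
      have := h i (by omega) <;> have := h j (by omega) <;> have := h k c <;> omega
  unfold PB
  rw [e1, e2]

theorem fastB_iff (f : ℕ → ℕ) : fastB f = true ↔ PB 5 f := by
  unfold fastB
  simp only [force_eq]
  rw [testB_iff]
  apply PB5_congr
  intro i hi
  interval_cases i <;> rfl

instance decB (f : ℕ → ℕ) : Decidable (PB 5 f) := decidable_of_iff _ (fastB_iff f)

theorem baseA : cnt PA 3 = 1 := by
  unfold cnt
  rw [Set.ncard_eq_toFinset_card', Set.toFinset_ofPred]
  decide +kernel

theorem baseB : cnt PB 5 = 5 := by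
  unfold cnt
  rw [Set.ncard_eq_toFinset_card', Set.toFinset_ofPred]
  decide +kernel

theorem cntA (n : ℕ) (hn : 3 ≤ n) : cnt PA n = 2 * n - 5 := by
  induction n, hn using Nat.le_induction with
  | base => exact baseA
  | succ k hk ih => rw [stepA k hk, ih]; omega

theorem cntB (n : ℕ) (hn : 5 ≤ n) : cnt PB n = 2 * n - 5 := by
  induction n, hn using Nat.le_induction with
  | base => exact baseB
  | succ k hk ih => rw [stepB k hk, ih]; omega

/-- For `n ≥ 5`, `s_n(123;312) = s_n(∅;{123,312})`, both being equal to `2n−5`. -/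
theorem sAvoidContain_123_312_eq_sContainBoth :
    ∀ n : ℕ, 5 ≤ n →
      sAvoidContain p123 p312 n = sContainBoth p123 p312 n ∧
        sAvoidContain p123 p312 n = 2 * n - 5 := by
  intro n hn
  rw [A_eq, B_eq, cntA n (by omega), cntB n hn]
  exact ⟨rfl, rfl⟩
end
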